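/- Let T be a finite simple graph that is a tree and has a vertex of degree at least 4. Then there exists a finite simple graph T' such that T' is a tree, every vertex of T' has degree at most 3, the number of vertices of T' is at most 2·|T| − 4 (where |T| is the number of vertices of T), and there is an injective group homomorphism from G(T) into G(T'). -/

import Mathlib

open SimpleGraph

/-- The set of commutator relations of a graph: one commutator for each edge. -/
def raagRels {V : Type} (G : SimpleGraph V) : Set (FreeGroup V) :=
  {r | ∃ u v : V, G.Adj u v ∧
    r = FreeGroup.of u * FreeGroup.of v * (FreeGroup.of u)⁻¹ * (FreeGroup.of v)⁻¹}

/-- The right-angled Artin group `A(G)` of a graph `G`. -/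
abbrev RAAG {V : Type} (G : SimpleGraph V) : Type := PresentedGroup (raagRels G)

/-- `G(Γ) = A(Γᶜ)`, the RAAG on the complement graph. -/
abbrev GG {V : Type} (G : SimpleGraph V) : Type := RAAG Gᶜ

/-- A linear forest: an acyclic graph all of whose vertices have degree at most 2. -/
def IsLinearForest {V : Type} (G : SimpleGraph V) : Prop :=
  G.IsAcyclic ∧ ∀ v : V, (G.neighborSet v).ncard ≤ 2

/-- The star of a vertex: the vertex together with its neighbours. -/
def starSet {V : Type} (G : SimpleGraph V) (v : V) : Set V :=
  insert v (G.neighborSet v)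

/-- The double `D_v(G)` of `G` along the star of `v`: original vertices together with
copies of the vertices outside the star. -/
def GraphDouble {V : Type} (G : SimpleGraph V) (v : V) :
    SimpleGraph (V ⊕ {w : V // w ∉ starSet G v}) :=
  SimpleGraph.fromRel (fun x y =>
    match x, y with
    | Sum.inl a, Sum.inl b => G.Adj a b
    | Sum.inr a, Sum.inr b => G.Adj a.1 b.1
    | Sum.inl a, Sum.inr b => a ∈ starSet G v ∧ G.Adj a b.1
    | Sum.inr _, Sum.inl _ => False)

/-- Subdivision of the edge `[v,w]` of `Λ`, with `none` as the new vertex. -/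
def SubdivEdge {V : Type} (Λ : SimpleGraph V) (v w : V) : SimpleGraph (Option V) :=
  SimpleGraph.fromRel (fun x y =>
    match x, y with
    | some a, some b => Λ.Adj a b ∧ ¬((a = v ∧ b = w) ∨ (a = w ∧ b = v))
    | some a, none => a = v ∨ a = w
    | none, some _ => False
    | none, none => False)

/-- The graph `Λ_u⁻(w₁,w₂)`, with `none` as the new vertex `v`. -/
def MinusGraph {V : Type} (Λ : SimpleGraph V) (u w₁ w₂ : V) : SimpleGraph (Option V) :=
  SimpleGraph.fromRel (fun x y =>
    match x, y with
    | some a, some b => Λ.Adj a b ∧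
        ¬((a = u ∧ b = w₁) ∨ (a = w₁ ∧ b = u) ∨ (a = u ∧ b = w₂) ∨ (a = w₂ ∧ b = u))
    | some a, none => a = w₁ ∨ a = u ∨ a = w₂
    | none, some _ => False
    | none, none => False)

/-- The graph `Λ_u⁺(w₁,w₂)`: `Λ_u⁻(w₁,w₂)` with the edge `[u,w₂]` added back. -/
def PlusGraph {V : Type} (Λ : SimpleGraph V) (u w₁ w₂ : V) : SimpleGraph (Option V) :=
  SimpleGraph.fromRel (fun x y =>
    (MinusGraph Λ u w₁ w₂).Adj x y ∨ (x = some u ∧ y = some w₂))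

section CoContraction

variable {V : Type}

lemma minus_some_some (T : SimpleGraph V) (u w₁ w₂ a b : V) :
    (MinusGraph T u w₁ w₂).Adj (some a) (some b) ↔ T.Adj a b ∧
      ¬((a = u ∧ b = w₁) ∨ (a = w₁ ∧ b = u) ∨ (a = u ∧ b = w₂) ∨ (a = w₂ ∧ b = u)) := by
  simp only [MinusGraph, SimpleGraph.fromRel_adj, ne_eq, Option.some.injEq]
  constructor
  · rintro ⟨_, h | h⟩
    · exact h
    · exact ⟨h.1.symm, by tauto⟩
  · rintro h
    exact ⟨h.1.ne, Or.inl h⟩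

lemma minus_some_none (T : SimpleGraph V) (u w₁ w₂ a : V) :
    (MinusGraph T u w₁ w₂).Adj (some a) none ↔ a = w₁ ∨ a = u ∨ a = w₂ := by
  simp [MinusGraph, SimpleGraph.fromRel_adj]

lemma minus_none_some (T : SimpleGraph V) (u w₁ w₂ a : V) :
    (MinusGraph T u w₁ w₂).Adj none (some a) ↔ a = w₁ ∨ a = u ∨ a = w₂ := by
  rw [SimpleGraph.adj_comm, minus_some_none]

lemma raag_comm {G : SimpleGraph V} {a b : V} (h : G.Adj a b) :
    (PresentedGroup.of a : RAAG G) * PresentedGroup.of b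
      = PresentedGroup.of b * PresentedGroup.of a := by
  have : (PresentedGroup.mk (raagRels G)) (FreeGroup.of a * FreeGroup.of b *
      (FreeGroup.of a)⁻¹ * (FreeGroup.of b)⁻¹) = 1 :=
    PresentedGroup.one_of_mem ⟨a, b, h, rfl⟩
  rw [map_mul, map_mul, map_mul, map_inv, map_inv, mul_inv_eq_one, mul_inv_eq_iff_eq_mul] at this
  exact this

/-- Universal property of a right-angled Artin group. -/
def raagLift {G : SimpleGraph V} {H : Type} [Group H] (f : V → H)
    (hf : ∀ a b, G.Adj a b → f a * f b = f b * f a) : RAAG G →* H :=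
  PresentedGroup.toGroup (f := f) (by
    rintro r ⟨a, b, h, rfl⟩
    simp only [map_mul, map_inv, FreeGroup.lift_apply_of]
    rw [mul_inv_eq_one, mul_inv_eq_iff_eq_mul]
    exact hf a b h)

lemma raagLift_of {G : SimpleGraph V} {H : Type} [Group H] (f : V → H)
    (hf : ∀ a b, G.Adj a b → f a * f b = f b * f a) (a : V) :
    raagLift f hf (PresentedGroup.of a) = f a :=
  PresentedGroup.toGroup.of _

open Classical in
/-- Images of the generators under the embedding. -/
noncomputable def phiFun (T : SimpleGraph V) (u w₁ w₂ : V) (a : V) : GG (MinusGraph T u w₁ w₂) :=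
  if a = u then PresentedGroup.of none * PresentedGroup.of (some u) * (PresentedGroup.of none)⁻¹
  else PresentedGroup.of (some a)

open Classical in
/-- Images of the generators in a permutation group. -/
noncomputable def psiFun (T : SimpleGraph V) (u w₁ w₂ : V) :
    Option V → Equiv.Perm (GG T ⊕ GG T)
  | none => Equiv.sumComm _ _
  | some a =>
    if a = u then Equiv.sumCongr (Equiv.refl _) (Equiv.mulLeft (PresentedGroup.of u))
    else if a = w₁ ∨ a = w₂ then
      Equiv.sumCongr (Equiv.mulLeft (PresentedGroup.of a)) (Equiv.refl _)
    else Equiv.sumCongr (Equiv.mulLeft (PresentedGroup.of a)) (Equiv.mulLeft (PresentedGroup.of a))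

lemma phi_comm (T : SimpleGraph V) (u w₁ w₂ : V) (h₁ : T.Adj u w₁) (h₂ : T.Adj u w₂)
    (a b : V) (h : Tᶜ.Adj a b) :
    phiFun T u w₁ w₂ a * phiFun T u w₁ w₂ b = phiFun T u w₁ w₂ b * phiFun T u w₁ w₂ a := by
  have key : ∀ c, Tᶜ.Adj u c → Commute (phiFun T u w₁ w₂ u) (phiFun T u w₁ w₂ c) := by
    intro c hc
    rw [SimpleGraph.compl_adj] at hc
    have hcu : c ≠ u := hc.1.symm
    have hc1 : c ≠ w₁ := by rintro rfl; exact hc.2 h₁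
    have hc2 : c ≠ w₂ := by rintro rfl; exact hc.2 h₂
    have e1 : Commute (PresentedGroup.of none : GG (MinusGraph T u w₁ w₂))
        (PresentedGroup.of (some c)) := by
      apply raag_comm
      rw [SimpleGraph.compl_adj, minus_none_some]
      exact ⟨by simp, by tauto⟩
    have e2 : Commute (PresentedGroup.of (some u) : GG (MinusGraph T u w₁ w₂))
        (PresentedGroup.of (some c)) := by
      apply raag_comm
      rw [SimpleGraph.compl_adj, minus_some_some]
      exact ⟨by simpa using hc.1, by tauto⟩
    simp only [phiFun, if_neg hcu, if_true]
    exact (e1.mul_left e2).mul_left e1.inv_left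
  by_cases ha : a = u
  · subst ha; exact key b h
  by_cases hb : b = u
  · subst hb; exact (key a h.symm).symm
  simp only [phiFun, if_neg ha, if_neg hb]
  apply raag_comm
  rw [SimpleGraph.compl_adj] at h ⊢
  rw [minus_some_some]
  exact ⟨by simpa using h.1, by tauto⟩

lemma psi_comm (T : SimpleGraph V) (u w₁ w₂ : V)
    (x y : Option V) (h : (MinusGraph T u w₁ w₂)ᶜ.Adj x y) :
    psiFun T u w₁ w₂ x * psiFun T u w₁ w₂ y = psiFun T u w₁ w₂ y * psiFun T u w₁ w₂ x := by
  have key : ∀ c, (MinusGraph T u w₁ w₂)ᶜ.Adj none (some c) →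
      psiFun T u w₁ w₂ none * psiFun T u w₁ w₂ (some c)
        = psiFun T u w₁ w₂ (some c) * psiFun T u w₁ w₂ none := by
    intro c hc
    rw [SimpleGraph.compl_adj, minus_none_some] at hc
    have h1 : c ≠ u := by tauto
    have h2 : ¬ (c = w₁ ∨ c = w₂) := by tauto
    simp only [psiFun, if_neg h1, if_neg h2]
    ext z
    rcases z with z | z <;> simp
  rcases x with _ | a <;> rcases y with _ | b
  · rfl
  · exact key b h
  · exact (key a h.symm).symm
  · rw [SimpleGraph.compl_adj, minus_some_some] at h
    have hne : a ≠ b := by simpa using h.1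
    have hc : ¬ T.Adj a b ∨ ((a = u ∧ b = w₁) ∨ (a = w₁ ∧ b = u) ∨ (a = u ∧ b = w₂) ∨
        (a = w₂ ∧ b = u)) := by tauto
    by_cases hT : T.Adj a b
    · have hc := hc.resolve_left (not_not.mpr hT)
      have hc' : (a = u ∧ b ≠ u ∧ (b = w₁ ∨ b = w₂)) ∨ (b = u ∧ a ≠ u ∧ (a = w₁ ∨ a = w₂)) := by
        grind
      rcases hc' with ⟨h1, h2, h3⟩ | ⟨h1, h2, h3⟩
      · simp only [psiFun, if_pos h1, if_neg h2, if_pos h3]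
        ext z
        rcases z with z | z <;> simp
      · simp only [psiFun, if_pos h1, if_neg h2, if_pos h3]
        ext z
        rcases z with z | z <;> simp
    · have hcomm : (PresentedGroup.of a : GG T) * PresentedGroup.of b
          = PresentedGroup.of b * PresentedGroup.of a :=
        raag_comm ((SimpleGraph.compl_adj _ _ _).2 ⟨hne, hT⟩)
      have hcomm' : ∀ z : GG T, (PresentedGroup.of a : GG T) * (PresentedGroup.of b * z)
          = PresentedGroup.of b * (PresentedGroup.of a * z) := by
        intro z; rw [← mul_assoc, hcomm, mul_assoc]
      ext z
      simp only [psiFun]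
      split_ifs <;> subst_vars <;> rcases z with z | z <;>
        first | exact absurd rfl hne | (simp; done) | (simp only [Equiv.Perm.mul_apply, Equiv.sumCongr_apply, Sum.map_inl, Sum.map_inr, Equiv.coe_mulLeft, hcomm'])

lemma cocontraction (T : SimpleGraph V) (u w₁ w₂ : V) (h₁ : T.Adj u w₁) (h₂ : T.Adj u w₂) :
    ∃ φ : GG T →* GG (MinusGraph T u w₁ w₂), Function.Injective φ := by
  let φ : GG T →* GG (MinusGraph T u w₁ w₂) :=
    raagLift (phiFun T u w₁ w₂) (phi_comm T u w₁ w₂ h₁ h₂)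
  let ψ : GG (MinusGraph T u w₁ w₂) →* Equiv.Perm (GG T ⊕ GG T) :=
    raagLift (psiFun T u w₁ w₂) (psi_comm T u w₁ w₂)
  have hψ : ∀ x, ψ (PresentedGroup.of x) = psiFun T u w₁ w₂ x := raagLift_of _ _
  have hφ : ∀ x, φ (PresentedGroup.of x) = phiFun T u w₁ w₂ x := raagLift_of _ _
  have key : ∀ g : GG T, ∀ x : GG T, ψ (φ g) (Sum.inl x) = Sum.inl (g * x) := by
    intro g
    have hg : g ∈ Subgroup.closure (Set.range (PresentedGroup.of (rels := raagRels Tᶜ))) := by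
      rw [PresentedGroup.closure_range_of]; trivial
    induction hg using Subgroup.closure_induction with
    | mem y hy =>
      obtain ⟨a, rfl⟩ := hy
      intro x
      rw [hφ]
      by_cases ha : a = u
      · subst ha
        simp only [phiFun, if_true, map_mul, map_inv, hψ, psiFun]
        simp [Equiv.Perm.mul_apply, Equiv.Perm.inv_def]
      · simp only [phiFun, if_neg ha, hψ, psiFun]
        split_ifs <;> simp
    | one => intro x; simp
    | mul y z _ _ hy hz =>
      intro x
      rw [map_mul, map_mul, Equiv.Perm.mul_apply, hz, hy, mul_assoc]
    | inv y _ hy =>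
      intro x
      rw [map_inv, map_inv, Equiv.Perm.inv_eq_iff_eq, hy, mul_inv_cancel_left]
  refine ⟨φ, fun g g' hgg => ?_⟩
  have h1 := key g 1
  rw [hgg, key g' 1] at h1
  simpa using h1.symm

end CoContraction

section Degrees

variable {V : Type} [Fintype V] (T : SimpleGraph V) (u w₁ w₂ : V)

lemma deg_none (h₁ : T.Adj u w₁) (h₂ : T.Adj u w₂) (hw : w₁ ≠ w₂) :
    ((MinusGraph T u w₁ w₂).neighborSet none).ncard = 3 := by
  have : (MinusGraph T u w₁ w₂).neighborSet none = some '' {w₁, u, w₂} := by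
    ext x
    rcases x with _ | a
    · simp
    · simp [minus_none_some]
  rw [this, Set.ncard_image_of_injective _ (Option.some_injective _), Set.ncard_eq_three]
  exact ⟨w₁, u, w₂, h₁.ne', hw, h₂.ne, rfl⟩

lemma ncard_ins (s : Set V) : (insert none (some '' s) : Set (Option V)).ncard = s.ncard + 1 := by
  rw [Set.ncard_insert_of_notMem (by simp) (Set.toFinite _),
    Set.ncard_image_of_injective _ (Option.some_injective _)]

lemma deg_u (h₁ : T.Adj u w₁) (h₂ : T.Adj u w₂) (hw : w₁ ≠ w₂) :
    ((MinusGraph T u w₁ w₂).neighborSet (some u)).ncard + 1 = (T.neighborSet u).ncard := by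
  have : (MinusGraph T u w₁ w₂).neighborSet (some u)
      = insert none (some '' (T.neighborSet u \ {w₁, w₂})) := by
    have e1 := h₁.ne
    have e2 := h₂.ne
    ext x
    rcases x with _ | a
    · simp [minus_some_none]
    · simp [minus_some_some, e1, e2]
  rw [this, ncard_ins, add_assoc]
  have h := Set.ncard_sdiff_add_ncard_of_subset
    (s := {w₁, w₂}) (t := T.neighborSet u) (by
      rintro x (rfl | rfl)
      · exact h₁
      · exact h₂) (Set.toFinite _)
  rwa [Set.ncard_pair hw] at h

lemma deg_w (h₁ : T.Adj u w₁) (h₂ : T.Adj u w₂) (a : V) (ha : a = w₁ ∨ a = w₂) :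
    ((MinusGraph T u w₁ w₂).neighborSet (some a)).ncard = (T.neighborSet a).ncard := by
  have hau : T.Adj a u := by rcases ha with rfl | rfl <;> [exact h₁.symm; exact h₂.symm]
  have hne := hau.ne
  have : (MinusGraph T u w₁ w₂).neighborSet (some a)
      = insert none (some '' (T.neighborSet a \ {u})) := by
    ext x
    rcases x with _ | b
    · simp [minus_some_none]; tauto
    · simp [minus_some_some, hne]; tauto
  rw [this, ncard_ins]
  exact Set.ncard_sdiff_singleton_add_one hau (Set.toFinite _)

lemma deg_other (a : V) (hu : a ≠ u) (h1 : a ≠ w₁) (h2 : a ≠ w₂) :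
    ((MinusGraph T u w₁ w₂).neighborSet (some a)).ncard = (T.neighborSet a).ncard := by
  have : (MinusGraph T u w₁ w₂).neighborSet (some a) = some '' (T.neighborSet a) := by
    ext x
    rcases x with _ | b
    · simp [minus_some_none, hu, h1, h2]
    · simp [minus_some_some, hu, h1, h2]
  rw [this, Set.ncard_image_of_injective _ (Option.some_injective _)]

lemma deg_ne (h₁ : T.Adj u w₁) (h₂ : T.Adj u w₂) (a : V) (hu : a ≠ u) :
    ((MinusGraph T u w₁ w₂).neighborSet (some a)).ncard = (T.neighborSet a).ncard := by
  by_cases h : a = w₁ ∨ a = w₂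
  · exact deg_w T u w₁ w₂ h₁ h₂ a h
  · exact deg_other T u w₁ w₂ a hu (by tauto) (by tauto)

lemma sum_ncard {V : Type} [Fintype V] (G : SimpleGraph V) :
    ∑ v, (G.neighborSet v).ncard = 2 * Nat.card G.edgeSet := by
  classical
  have h := G.sum_degrees_eq_twice_card_edges
  rw [Nat.card_eq_fintype_card, ← SimpleGraph.edgeFinset_card, ← h]
  refine Finset.sum_congr rfl fun v _ => ?_
  rw [Set.ncard_eq_toFinset_card']
  rfl

lemma minus_connected (hT : T.Connected) (h₁ : T.Adj u w₁) (h₂ : T.Adj u w₂) :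
    (MinusGraph T u w₁ w₂).Connected := by
  set M := MinusGraph T u w₁ w₂ with hM
  have hn : ∀ a, a = w₁ ∨ a = u ∨ a = w₂ → M.Reachable (some a) none := fun a ha =>
    SimpleGraph.Adj.reachable ((minus_some_none T u w₁ w₂ a).2 ha)
  have step : ∀ a b, T.Adj a b → M.Reachable (some a) (some b) := by
    intro a b hab
    by_cases h : (a = u ∧ b = w₁) ∨ (a = w₁ ∧ b = u) ∨ (a = u ∧ b = w₂) ∨ (a = w₂ ∧ b = u)
    · exact (hn a (by tauto)).trans (hn b (by tauto)).symm
    · exact SimpleGraph.Adj.reachable ((minus_some_some T u w₁ w₂ a b).2 ⟨hab, h⟩)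
  have walk : ∀ a b, M.Reachable (some a) (some b) := by
    intro a b
    obtain ⟨p⟩ := hT.preconnected a b
    induction p with
    | nil => exact SimpleGraph.Reachable.refl _
    | cons h _ ih => exact (step _ _ h).trans ih
  have all : ∀ x, M.Reachable x none := by
    rintro (_ | a)
    · exact SimpleGraph.Reachable.refl _
    · exact (walk a u).trans (hn u (by tauto))
  exact { preconnected := fun x y => (all x).trans (all y).symm, nonempty := ⟨none⟩ }

lemma minus_tree (hT : T.IsTree) (h₁ : T.Adj u w₁) (h₂ : T.Adj u w₂) (hw : w₁ ≠ w₂) :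
    (MinusGraph T u w₁ w₂).IsTree := by
  classical
  rw [SimpleGraph.isTree_iff_connected_and_card] at hT ⊢
  refine ⟨minus_connected T u w₁ w₂ hT.1 h₁ h₂, ?_⟩
  have e1 := sum_ncard T
  have e2 := sum_ncard (MinusGraph T u w₁ w₂)
  rw [Fintype.sum_option, deg_none T u w₁ w₂ h₁ h₂ hw,
    ← Finset.add_sum_erase _ _ (Finset.mem_univ u)] at e2
  rw [← Finset.add_sum_erase _ _ (Finset.mem_univ u), ← deg_u T u w₁ w₂ h₁ h₂ hw] at e1
  have e3 := Finset.sum_congr (s₁ := Finset.univ.erase u) rfl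
    (fun a ha => deg_ne T u w₁ w₂ h₁ h₂ a (Finset.ne_of_mem_erase ha))
  have e4 : Nat.card (Option V) = Nat.card V + 1 := by simp
  have e5 := hT.2
  omega

/-- The total excess of the degrees over 3 drops by one. -/
lemma minus_excess (h₁ : T.Adj u w₁) (h₂ : T.Adj u w₂) (hw : w₁ ≠ w₂)
    (hd : 4 ≤ (T.neighborSet u).ncard) :
    ∑ x, (((MinusGraph T u w₁ w₂).neighborSet x).ncard - 3) + 1
      = ∑ v, ((T.neighborSet v).ncard - 3) := by
  classical
  rw [Fintype.sum_option, deg_none T u w₁ w₂ h₁ h₂ hw,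
    ← Finset.add_sum_erase _ _ (Finset.mem_univ u),
    ← Finset.add_sum_erase Finset.univ (fun v => (T.neighborSet v).ncard - 3) (Finset.mem_univ u)]
  have e3 := Finset.sum_congr (s₁ := Finset.univ.erase u) rfl
    (fun a ha => congrArg (· - 3) (deg_ne T u w₁ w₂ h₁ h₂ a (Finset.ne_of_mem_erase ha)))
  have e4 := deg_u T u w₁ w₂ h₁ h₂ hw
  try simp only at e3
  omega

end Degrees

lemma main_induction (k : ℕ) : ∀ (V : Type) (_ : Fintype V) (T : SimpleGraph V), T.IsTree →
    ∑ v, ((T.neighborSet v).ncard - 3) = k →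
    ∃ (W : Type) (_ : Fintype W) (T' : SimpleGraph W), T'.IsTree ∧
      (∀ w : W, (T'.neighborSet w).ncard ≤ 3) ∧
      Fintype.card W = Fintype.card V + k ∧
      ∃ φ : GG T →* GG T', Function.Injective φ := by
  induction k with
  | zero =>
    intro V _ T hT hs
    refine ⟨V, inferInstance, T, hT, fun w => ?_, rfl, MonoidHom.id _, Function.injective_id⟩
    have := (Finset.sum_eq_zero_iff.1 hs) w (Finset.mem_univ w)
    omega
  | succ k ih =>
    intro V _ T hT hs
    obtain ⟨u, hu⟩ : ∃ u, 4 ≤ (T.neighborSet u).ncard := by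
      by_contra! hcon
      have : ∑ v, ((T.neighborSet v).ncard - 3) = 0 :=
        Finset.sum_eq_zero fun v _ => by have := hcon v; omega
      omega
    obtain ⟨w₁, h₁, w₂, h₂, hw⟩ := (Set.one_lt_ncard (Set.toFinite (T.neighborSet u))).1 (by omega)
    have hex := minus_excess T u w₁ w₂ h₁ h₂ hw hu
    obtain ⟨W, iW, T', t1, t2, t3, φ, hφ⟩ := ih (Option V) inferInstance (MinusGraph T u w₁ w₂)
      (minus_tree T u w₁ w₂ hT h₁ h₂ hw) (by omega)
    obtain ⟨φ₀, hφ₀⟩ := cocontraction T u w₁ w₂ h₁ h₂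
    refine ⟨W, iW, T', t1, t2, ?_, φ.comp φ₀, hφ.comp hφ₀⟩
    rw [t3, Fintype.card_option]; omega

lemma excess_bound {V : Type} [Fintype V] (T : SimpleGraph V) (hT : T.IsTree)
    (hdeg : ∃ v : V, 4 ≤ (T.neighborSet v).ncard) :
    ∑ v, ((T.neighborSet v).ncard - 3) + 4 ≤ Fintype.card V := by
  classical
  obtain ⟨u, hu⟩ := hdeg
  have hT' := SimpleGraph.isTree_iff_connected_and_card.1 hT
  have hs := sum_ncard T
  obtain ⟨y, hy⟩ : (T.neighborSet u).Nonempty := by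
    rw [← Set.ncard_pos (Set.toFinite _)]; omega
  haveI : Nontrivial V := ⟨u, y, hy.ne⟩
  have hpos : ∀ v, 1 ≤ (T.neighborSet v).ncard := by
    intro v
    obtain ⟨w, hw⟩ := hT'.1.preconnected.exists_adj_of_nontrivial v
    exact (Set.ncard_pos (Set.toFinite _)).2 ⟨w, hw⟩
  have hle : ∑ v ∈ Finset.univ.erase u, ((T.neighborSet v).ncard - 3 + 1)
      ≤ ∑ v ∈ Finset.univ.erase u, (T.neighborSet v).ncard :=
    Finset.sum_le_sum fun v _ => by have := hpos v; omega
  rw [Finset.sum_add_distrib, Finset.sum_const, Finset.card_erase_of_mem (Finset.mem_univ u),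
    Finset.card_univ] at hle
  rw [← Finset.add_sum_erase _ _ (Finset.mem_univ u)] at hs ⊢
  have e := hT'.2
  rw [Nat.card_eq_fintype_card (α := V)] at e
  simp only [smul_eq_mul, mul_one] at hle
  omega

/-- If `T` is a finite tree with a vertex of degree at least 4, then there is a finite
tree `T'` of maximum degree at most 3 with at most `2|T| - 4` vertices such that
`G(T) ↪ G(T')`. -/
theorem statement19 {V : Type} [Fintype V] (T : SimpleGraph V) (hT : T.IsTree)
    (hdeg : ∃ v : V, 4 ≤ (T.neighborSet v).ncard) :
    ∃ (W : Type) (_ : Fintype W) (T' : SimpleGraph W), T'.IsTree ∧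
      (∀ w : W, (T'.neighborSet w).ncard ≤ 3) ∧
      Fintype.card W ≤ 2 * Fintype.card V - 4 ∧
      ∃ φ : GG T →* GG T', Function.Injective φ := by
  obtain ⟨W, iW, T', t1, t2, t3, φ⟩ := main_induction _ V inferInstance T hT rfl
  refine ⟨W, iW, T', t1, t2, ?_, φ⟩
  have := excess_bound T hT hdeg
  omega
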